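/- Let ⟨λ,ν⟩ = (ν,η) be a marked partition of type X of n. Then d_S⟨λ,ν⟩ ≤ d_S⟨λ,∅⟩ in dominance order. Explicitly: in type B, ((ν ∪ (η⁻)_C)*)_C ≤ ((λ⁻)_C)*; in type C (assuming η ≠ ∅), ((ν ∪ (η⁺)_B)*)_B ≤ ((λ⁺)_B)*; in type D, ((ν ∪ ((η*)_D)*)*)_D ≤ (λ*)_D. -/

import Mathlib

namespace NilDual

/-- A "partition" is encoded as a multiset of natural numbers (its parts). -/
abbrev Ptn := Multiset ℕ

/-- All parts are positive. -/
def IsPartition (l : Ptn) : Prop := ∀ a ∈ l, 0 < a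

/-- `height l a` is the number of parts of `l` that are ≥ `a`. -/
def height (l : Ptn) (a : ℕ) : ℕ := Multiset.card (l.filter (fun p => a ≤ p))

/-- `psum l j` is the sum of the `j` largest parts of `l`. -/
def psum (l : Ptn) (j : ℕ) : ℕ := ∑ a ∈ Finset.Icc 1 l.sum, min j (height l a)

/-- `Dom l m` means `l ≤ m` in the dominance order. -/
def Dom (l m : Ptn) : Prop := ∀ j : ℕ, psum l j ≤ psum m j

/-- The transpose (conjugate) partition. -/
def transpose (l : Ptn) : Ptn :=
  Multiset.filter (fun x => 0 < x)
    (Multiset.map (fun a => height l a) (Finset.Icc 1 l.sum).val)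

/-- The largest part (0 for the empty partition). -/
def maxPart (l : Ptn) : ℕ := l.sup

/-- The smallest part (0 for the empty partition). -/
noncomputable def minPart (l : Ptn) : ℕ := sInf {a : ℕ | a ∈ l}

/-- `λ⁺`: add 1 to the largest part. -/
def up (l : Ptn) : Ptn := (maxPart l + 1) ::ₘ l.erase (maxPart l)

/-- `λ⁻`: subtract 1 from the smallest part, deleting it if it becomes 0. -/
noncomputable def down (l : Ptn) : Ptn :=
  if minPart l ≤ 1 then l.erase (minPart l)
  else (minPart l - 1) ::ₘ l.erase (minPart l)

/-- The join `λ ∨ μ = (λ* ∪ μ*)*`. -/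
def pjoin (l m : Ptn) : Ptn := transpose (transpose l + transpose m)

/-- `λ₋ = (λ*⁻)*`. -/
noncomputable def lowerStar (l : Ptn) : Ptn := transpose (down (transpose l))

inductive PType | B | C | D
deriving DecidableEq

/-- Parts of this parity must occur with even multiplicity in a partition of type `X`. -/
def badPart : PType → ℕ → Prop
  | PType.B, a => Even a
  | PType.C, a => Odd a
  | PType.D, a => Even a

/-- Membership in `𝒫_X` (sum unconstrained). -/
def InP (X : PType) (l : Ptn) : Prop :=
  IsPartition l ∧ ∀ a : ℕ, badPart X a → Even (l.count a)

/-- The parity of `n` required for `𝒫_X(n)` to be defined. -/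
def sumParity : PType → ℕ → Prop
  | PType.B, n => Odd n
  | PType.C, n => Even n
  | PType.D, n => Even n

/-- `m` is the X-collapse of `l`: `m ∈ 𝒫_X(|l|)`, `m ≤ l` in dominance order, and `m`
dominates every member of `𝒫_X(|l|)` that is dominated by `l`. -/
def IsCollapse (X : PType) (l m : Ptn) : Prop :=
  InP X m ∧ m.sum = l.sum ∧ Dom m l ∧
    ∀ ν : Ptn, InP X ν → ν.sum = l.sum → Dom ν l → Dom ν m

def CollapseDefined (X : PType) (l : Ptn) : Prop := ∃ m, IsCollapse X l m

open Classical in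
/-- The X-collapse `λ_X` (junk value `0` if it does not exist). -/
noncomputable def collapse (X : PType) (l : Ptn) : Ptn :=
  if h : CollapseDefined X l then h.choose else 0

/-- `l` is superior to `m`: smallest part of `l` ≥ largest part of `m`. -/
def Superior (l m : Ptn) : Prop := maxPart m ≤ minPart l

def EvenlySuperior (l m : Ptn) : Prop := ∃ k : ℕ, Even k ∧ maxPart m ≤ k ∧ k ≤ minPart l

def OddlySuperior (l m : Ptn) : Prop := ∃ k : ℕ, Odd k ∧ maxPart m ≤ k ∧ k ≤ minPart l

/-- The parity required of marked parts in type `X`. -/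
def markParity : PType → ℕ → Prop
  | PType.C, a => Even a
  | _, a => Odd a

/-- `(ν, η)` is a marked partition of type `X`, with underlying partition `λ = ν + η`. -/
def IsMarked (X : PType) (nu eta : Ptn) : Prop :=
  InP X (nu + eta) ∧ sumParity X (nu + eta).sum ∧
  (∀ a ∈ nu, nu.count a = 1 ∧ markParity X a) ∧
  ((X = PType.B ∨ X = PType.D) → Even (Multiset.card nu))

/-- The Sommers duality map `d_S` on marked partitions `(ν, η)`. -/
noncomputable def dS (X : PType) (nu eta : Ptn) : Ptn :=
  match X with
  | PType.B => collapse PType.C (transpose (nu + collapse PType.C (down eta)))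
  | PType.C => collapse PType.B (transpose (nu + collapse PType.B (up eta)))
  | PType.D =>
      collapse PType.D (transpose (nu + transpose (collapse PType.D (transpose eta))))

/-- `a` is a markable part of `l` in type `X`. -/
def Markable (X : PType) (l : Ptn) (a : ℕ) : Prop :=
  a ∈ l ∧ markParity X a ∧
    (match X with
     | PType.B => Odd (height l a)
     | PType.C => Even (height l a)
     | PType.D => Even (height l a))

/-- The marked partition `⟨l, ν⟩` is reduced. -/
def Reduced (X : PType) (l nu : Ptn) : Prop := ∀ a ∈ nu, Markable X l a

/-- The parts entering the definition of a special marked partition: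
even of odd height (B), odd of even height (C), even of even height (D). -/
def AntiPart (X : PType) (l : Ptn) (a : ℕ) : Prop :=
  match X with
  | PType.B => Even a ∧ Odd (height l a)
  | PType.C => Odd a ∧ Even (height l a)
  | PType.D => Even a ∧ Even (height l a)

/-- The reduced marked partition `⟨l, ν⟩` is special. -/
def SpecialMP (X : PType) (l nu : Ptn) : Prop :=
  ∀ a ∈ l, AntiPart X l a → Even (height nu a)

/-- `a` is the largest part of `l` whose height satisfies `P`. -/
def LargestWith (l : Ptn) (P : ℕ → Prop) (a : ℕ) : Prop :=
  a ∈ l ∧ P (height l a) ∧ ∀ b ∈ l, P (height l b) → b ≤ a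

/-- Height parity for the top marked part in a basic block. -/
def heightParity : PType → ℕ → Prop
  | PType.B => fun n => Odd n
  | _ => fun n => Even n

/-- A basic block of type `X`. -/
def BasicBlock (X : PType) (nu eta : Ptn) : Prop :=
  IsMarked X nu eta ∧
  ((∃ n1 n2 : ℕ, n1 < n2 ∧ nu = {n2, n1} ∧ n1 = minPart (nu + eta) ∧
      LargestWith (nu + eta) (heightParity X) n2) ∨
   (X = PType.C ∧ ∃ n2 : ℕ, nu = {n2} ∧ LargestWith (nu + eta) (heightParity X) n2))

/-- An ultrabasic block: a basic block with `n₁ ≤ 1`. -/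
def Ultrabasic (X : PType) (nu eta : Ptn) : Prop :=
  BasicBlock X nu eta ∧ (Multiset.card nu = 2 → minPart nu ≤ 1)

/-!
The number `colSum l j` of boxes in the first `j` columns of the diagram of `l` is the sum of the
`j` largest parts of `l*`, and as a function of `j` it is Legendre dual to `psum l`. Hence dominance
between partitions of the same integer is reversed inequality of column sums. Membership in `𝒫_X`
fixes the parity of every other column sum, so the column sums of `l_X` are the least concave
sequence above those of `l` with the prescribed parities.

In types B and C this shows that passing from `η` to the collapse of `η⁻` does not increase any
column sum, and passing to that of `η⁺` increases it by at most one, so the column sums of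
`ν ∪ (η⁻)_C` and `ν ∪ (η⁺)_B` are bounded in terms of those of `λ`. These bounds can exceed the
column sums of `(λ⁻)_C` and `(λ⁺)_B`, but not by enough to matter: if `κ ∈ 𝒫_X`, then at each strict
corner of `psum κ` its value has a prescribed parity, and a bound at the corners by a concave
sequence is a bound everywhere. Type D needs only the universal property of the collapse.
-/

/-! ### Concave sequences -/

/-- Discrete concavity of a sequence of natural numbers, written without subtraction. -/
def IsConcaveSeq (f : ℕ → ℕ) : Prop := ∀ j, f j + f (j + 2) ≤ 2 * f (j + 1)

namespace IsConcaveSeq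

variable {f g : ℕ → ℕ}

-- A descent `f (k + 1) < f k` would persist by concavity, and `ℕ` has no infinite descent.
lemma monotone (hf : IsConcaveSeq f) : Monotone f := by
  suffices ∀ n k, f k = n → f k ≤ f (k + 1) from monotone_nat_of_le_succ fun k => this _ k rfl
  intro n
  induction n using Nat.strong_induction_on with
  | _ n ih =>
    intro k hk
    by_contra! hlt
    have hstep := ih (f (k + 1)) (by omega) (k + 1) rfl
    have hconcave := hf k
    grind

lemma antitone_increment (hf : IsConcaveSeq f) : Antitone fun j => f (j + 1) - f j :=
  antitone_nat_of_succ_le fun j => by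
    have hconcave := hf j
    have hle := hf.monotone (Nat.le_succ j)
    grind

-- Past a first violation there are no corners of `g`, so `g - f` would grow without bound.
lemma le_of_le_at_corners (hf : IsConcaveSeq f) (hzero : g 0 ≤ f 0) {M : ℕ} (hM : ∀ j, g j ≤ M)
    (hcorner : ∀ j, g j + g (j + 2) < 2 * g (j + 1) → g (j + 1) ≤ f (j + 1)) (j : ℕ) :
    g j ≤ f j := by
  induction j with
  | zero => exact hzero
  | succ k ih =>
    by_contra! hlt
    have hgrowth : ∀ i, f (k + i + 1) + i < g (k + i + 1) ∧
        f (k + i + 1) + g (k + i) < g (k + i + 1) + f (k + i) := by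
      intro i
      induction i with
      | zero => constructor <;> grind
      | succ i ihi =>
        have hconcave := hf (k + i)
        have hflat : 2 * g (k + i + 1) ≤ g (k + i) + g (k + i + 2) := by
          by_contra! hstrict
          have := hcorner _ hstrict
          omega
        grind
    have hlarge := (hgrowth M).1
    have hbound := hM (k + M + 1)
    omega

end IsConcaveSeq

/-! ### Heights and column sums -/

section Height

variable (l m : Ptn)

lemma height_add (a : ℕ) : height (l + m) a = height l a + height m a := by
  simp only [height, Multiset.filter_add, Multiset.card_add]

lemma height_cons (p a : ℕ) : height (p ::ₘ l) a = (if a ≤ p then 1 else 0) + height l a := by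
  unfold height
  split_ifs with h
  · rw [Multiset.filter_cons_of_pos l h, Multiset.card_cons, add_comm]
  · rw [Multiset.filter_cons_of_neg l h, zero_add]

lemma height_antitone : Antitone (height l) := fun _ _ hab =>
  Multiset.card_le_card (Multiset.monotone_filter_right l fun _ hp => hab.trans hp)

lemma height_eq_add_count (a : ℕ) : height l a = height l (a + 1) + l.count a := by
  induction l using Multiset.induction_on with
  | empty => simp [height]
  | cons p l ih =>
    rw [height_cons, height_cons, Multiset.count_cons]
    split_ifs <;> omega

variable {l}

lemma height_eq_zero_of_forall_lt {a : ℕ} (h : ∀ p ∈ l, p < a) : height l a = 0 := by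
  rw [height, Multiset.card_eq_zero, Multiset.filter_eq_nil]
  exact fun p hp => not_le.2 (h p hp)

lemma height_eq_zero_of_sum_lt {a : ℕ} (h : l.sum < a) : height l a = 0 :=
  height_eq_zero_of_forall_lt fun _ hp => (Multiset.le_sum_of_mem hp).trans_lt h

lemma height_one_of_isPartition (hl : IsPartition l) : height l 1 = Multiset.card l :=
  congrArg Multiset.card (Multiset.filter_eq_self.2 hl)

lemma height_map_succ (a : ℕ) : height (l.map (· + 1)) (a + 1) = height l a := by
  simp only [height, Multiset.filter_map, Multiset.card_map, Function.comp_def,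
    Nat.add_le_add_iff_right]

end Height

-- Adding a first column to the diagram obtained by induction from the remaining columns.
lemma exists_partition_height_eq {N : ℕ} {h : ℕ → ℕ} (hanti : Antitone h)
    (hzero : ∀ a, N ≤ a → h a = 0) : ∃ m : Ptn, IsPartition m ∧ ∀ a, height m (a + 1) = h a := by
  induction N generalizing h with
  | zero => exact ⟨0, by simp [IsPartition], fun a => by simp [height, hzero]⟩
  | succ N ih =>
    obtain ⟨m, hm, hheight⟩ := ih (h := fun a => h (a + 1))
      (fun a b hab => hanti (by omega)) (fun a ha => hzero _ (by omega))
    have hcard : Multiset.card m ≤ h 0 := by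
      rw [← height_one_of_isPartition hm, ← zero_add 1, hheight]
      exact hanti zero_le_one
    have hpos : IsPartition (m.map (· + 1) + Multiset.replicate (h 0 - Multiset.card m) 1) := by
      intro p hp
      rcases Multiset.mem_add.1 hp with hp | hp
      · obtain ⟨q, -, rfl⟩ := Multiset.mem_map.1 hp
        exact q.succ_pos
      · rw [Multiset.eq_of_mem_replicate hp]
        exact one_pos
    refine ⟨_, hpos, fun a => ?_⟩
    rcases a with _ | a
    · rw [height_one_of_isPartition hpos, Multiset.card_add, Multiset.card_map,
        Multiset.card_replicate, Nat.add_sub_cancel' hcard]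
    · have hones : height (Multiset.replicate (h 0 - Multiset.card m) 1) (a + 2) = 0 :=
        height_eq_zero_of_forall_lt fun p hp => by
          rw [Multiset.eq_of_mem_replicate hp]
          omega
      rw [height_add, height_map_succ, hheight, hones, add_zero]

/-- The number of boxes in the first `j` columns of the diagram of `l`, which is the sum of the `j`
largest parts of the transpose of `l`. -/
def colSum (l : Ptn) (j : ℕ) : ℕ := (l.map (min · j)).sum

section ColSum

variable (l m : Ptn)

lemma colSum_zero_right : colSum l 0 = 0 := by simp [colSum]

lemma colSum_cons (p j : ℕ) : colSum (p ::ₘ l) j = min p j + colSum l j := by simp [colSum]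

lemma colSum_add (j : ℕ) : colSum (l + m) j = colSum l j + colSum m j := by simp [colSum]

lemma colSum_succ (j : ℕ) : colSum l (j + 1) = colSum l j + height l (j + 1) := by
  induction l using Multiset.induction_on with
  | empty => simp [colSum, height]
  | cons p l ih =>
    rw [colSum_cons, colSum_cons, height_cons, ih]
    split_ifs <;> omega

lemma colSum_eq_sum_range_height (j : ℕ) :
    colSum l j = ∑ a ∈ Finset.range j, height l (a + 1) := by
  induction j with
  | zero => exact colSum_zero_right l
  | succ j ih => rw [colSum_succ, Finset.sum_range_succ, ih]

lemma colSum_isConcaveSeq : IsConcaveSeq (colSum l) := fun j => by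
  have hanti : height l (j + 1 + 1) ≤ height l (j + 1) := height_antitone l (Nat.le_succ _)
  rw [colSum_succ l (j + 1), colSum_succ l j]
  omega

lemma colSum_add_colSum_add_count (j : ℕ) :
    colSum l j + colSum l (j + 2) + l.count (j + 1) = 2 * colSum l (j + 1) := by
  have hcount := height_eq_add_count l (j + 1)
  rw [colSum_succ l (j + 1), colSum_succ l j]
  omega

variable {l} {j : ℕ}

lemma colSum_eq_sum_of_forall_le (h : ∀ p ∈ l, p ≤ j) : colSum l j = l.sum := by
  rw [colSum, Multiset.map_congr rfl fun p hp => min_eq_left (h p hp), Multiset.map_id']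

lemma colSum_eq_sum (h : l.sum ≤ j) : colSum l j = l.sum :=
  colSum_eq_sum_of_forall_le fun _ hp => (Multiset.le_sum_of_mem hp).trans h

lemma colSum_eq_card_mul_of_forall_ge (h : ∀ p ∈ l, j ≤ p) :
    colSum l j = Multiset.card l * j := by
  rw [colSum, Multiset.map_congr rfl fun p hp => min_eq_right (h p hp), Multiset.map_const',
    Multiset.sum_replicate, smul_eq_mul]

end ColSum

lemma IsConcaveSeq.exists_colSum_eq {f : ℕ → ℕ} (hf : IsConcaveSeq f) (hzero : f 0 = 0)
    {N n : ℕ} (hN : ∀ j, N ≤ j → f j = n) : ∃ m : Ptn, IsPartition m ∧ ∀ j, colSum m j = f j := by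
  obtain ⟨m, hm, hheight⟩ := exists_partition_height_eq (N := N) hf.antitone_increment
    fun j hj => by rw [hN j hj, hN (j + 1) (by omega), Nat.sub_self]
  refine ⟨m, hm, fun j => ?_⟩
  simp only [colSum_eq_sum_range_height, hheight]
  rw [Finset.sum_range_tsub hf.monotone, hzero, Nat.sub_zero]

/-! ### Legendre duality between row sums and column sums -/

lemma sum_Icc_one_eq_sum_range {M : Type*} [AddCommMonoid M] (f : ℕ → M) (n : ℕ) :
    ∑ a ∈ Finset.Icc 1 n, f a = ∑ a ∈ Finset.range n, f (a + 1) := by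
  rw [← Finset.Ico_add_one_right_eq_Icc, Finset.sum_Ico_eq_sum_range]
  simp only [Nat.add_sub_cancel, add_comm 1]

section Duality

variable (l : Ptn) (j k : ℕ)

lemma psum_eq_sum_range {N : ℕ} (hN : l.sum ≤ N) :
    psum l j = ∑ a ∈ Finset.range N, min j (height l (a + 1)) := by
  rw [psum, sum_Icc_one_eq_sum_range]
  refine Finset.sum_subset (Finset.range_mono hN) fun a _ ha => ?_
  rw [Finset.mem_range, not_lt] at ha
  rw [height_eq_zero_of_sum_lt (by omega), Nat.min_zero]

lemma psum_zero : psum l 0 = 0 := by simp [psum]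

lemma sum_eq_colSum_add_sum_range :
    l.sum = colSum l k + ∑ a ∈ Finset.range l.sum, height l (k + a + 1) := by
  calc l.sum = colSum l (k + l.sum) := (colSum_eq_sum (Nat.le_add_left l.sum k)).symm
    _ = _ := by simp only [colSum_eq_sum_range_height, Finset.sum_range_add]

lemma psum_eq_sum_range_add_sum_range :
    psum l j = ∑ a ∈ Finset.range k, min j (height l (a + 1)) +
      ∑ a ∈ Finset.range l.sum, min j (height l (k + a + 1)) := by
  rw [psum_eq_sum_range l j (Nat.le_add_left l.sum k), Finset.sum_range_add]

lemma psum_add_colSum_le : psum l j + colSum l k ≤ l.sum + j * k := by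
  have hleft : ∑ a ∈ Finset.range k, min j (height l (a + 1)) ≤ j * k :=
    (Finset.sum_le_sum fun _ _ => min_le_left _ _).trans (by simp [mul_comm])
  have hright : ∑ a ∈ Finset.range l.sum, min j (height l (k + a + 1)) ≤
      ∑ a ∈ Finset.range l.sum, height l (k + a + 1) :=
    Finset.sum_le_sum fun _ _ => min_le_right _ _
  have hsum := sum_eq_colSum_add_sum_range l k
  rw [psum_eq_sum_range_add_sum_range l j k]
  omega

variable {l j k}

lemma psum_add_colSum_eq (hleft : ∀ a < k, j ≤ height l (a + 1)) (hright : height l (k + 1) ≤ j) :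
    psum l j + colSum l k = l.sum + j * k := by
  have hleft' : ∑ a ∈ Finset.range k, min j (height l (a + 1)) = j * k := by
    rw [Finset.sum_congr rfl fun a ha => min_eq_left (hleft a (Finset.mem_range.1 ha))]
    simp [mul_comm]
  have hright' : ∑ a ∈ Finset.range l.sum, min j (height l (k + a + 1)) =
      ∑ a ∈ Finset.range l.sum, height l (k + a + 1) :=
    Finset.sum_congr rfl fun a _ =>
      min_eq_right ((height_antitone l (by omega : k + 1 ≤ k + a + 1)).trans hright)
  have hsum := sum_eq_colSum_add_sum_range l k
  rw [psum_eq_sum_range_add_sum_range l j k]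
  omega

variable (l)

lemma exists_psum_add_colSum_eq_of_col (k : ℕ) : ∃ j, psum l j + colSum l k = l.sum + j * k :=
  ⟨height l (k + 1),
    psum_add_colSum_eq (fun _ ha => height_antitone l (by omega)) le_rfl⟩

lemma exists_psum_add_colSum_eq_of_row (j : ℕ) : ∃ k, psum l j + colSum l k = l.sum + j * k := by
  classical
  have hex : ∃ k, height l (k + 1) ≤ j :=
    ⟨l.sum, by rw [height_eq_zero_of_sum_lt (Nat.lt_succ_self _)]; exact Nat.zero_le j⟩
  exact ⟨Nat.find hex, psum_add_colSum_eq (fun a ha => (not_le.1 (Nat.find_min hex ha)).le)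
    (Nat.find_spec hex)⟩

lemma psum_le_sum (j : ℕ) : psum l j ≤ l.sum := by
  simpa [colSum_zero_right] using psum_add_colSum_le l j 0

end Duality

lemma dom_iff_colSum_le {l m : Ptn} (hsum : l.sum = m.sum) :
    Dom l m ↔ ∀ k, colSum m k ≤ colSum l k := by
  constructor
  · intro hdom k
    obtain ⟨j, hj⟩ := exists_psum_add_colSum_eq_of_col l k
    have hle := psum_add_colSum_le m j k
    have hpsum := hdom j
    omega
  · intro hcol j
    obtain ⟨k, hk⟩ := exists_psum_add_colSum_eq_of_row m j
    have hle := psum_add_colSum_le l j k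
    have hcolSum := hcol k
    omega

section Transpose

variable (l : Ptn)

lemma sum_map_filter_pos {f : ℕ → ℕ} (hf : f 0 = 0) (s : Multiset ℕ) :
    ((s.filter (0 < ·)).map f).sum = (s.map f).sum := by
  induction s using Multiset.induction_on with
  | empty => rfl
  | cons p s ih => rcases p.eq_zero_or_pos with rfl | hp <;> simp [*]

lemma colSum_transpose (j : ℕ) : colSum (transpose l) j = psum l j := by
  rw [colSum, transpose, sum_map_filter_pos (Nat.zero_min j), Multiset.map_map]
  exact Finset.sum_congr rfl fun a _ => min_comm (height l a) j

lemma sum_transpose : (transpose l).sum = l.sum := by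
  calc (transpose l).sum = ∑ a ∈ Finset.Icc 1 l.sum, height l a := by
        have hfilter := sum_map_filter_pos (f := id) rfl ((Finset.Icc 1 l.sum).val.map (height l))
        rwa [Multiset.map_id, Multiset.map_id] at hfilter
    _ = colSum l l.sum := by rw [sum_Icc_one_eq_sum_range, colSum_eq_sum_range_height]
    _ = l.sum := colSum_eq_sum le_rfl

lemma psum_transpose (j : ℕ) : psum (transpose l) j = colSum l j := by
  apply le_antisymm
  · obtain ⟨k, hk⟩ := exists_psum_add_colSum_eq_of_col l j
    have hle := psum_add_colSum_le (transpose l) j k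
    rw [colSum_transpose, sum_transpose, mul_comm] at hle
    omega
  · obtain ⟨k, hk⟩ := exists_psum_add_colSum_eq_of_row (transpose l) j
    have hle := psum_add_colSum_le l k j
    rw [colSum_transpose, sum_transpose, mul_comm] at hk
    omega

end Transpose

/-! ### Parity of the sums of a member of `𝒫_X` -/

/-- The residue modulo 2 of the column indices at which membership in `𝒫_X` prescribes the parity
of the column sum; the parts `a` restricted to even multiplicity are those for which `a + 1` has
this residue. -/
def parityClass : PType → ℕ
  | PType.B => 1
  | PType.C => 0
  | PType.D => 1

lemma parityClass_lt_two (X : PType) : parityClass X < 2 := by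
  cases X <;> decide

section Parity

variable {X : PType} {l : Ptn}

lemma badPart_iff (a : ℕ) : badPart X a ↔ (a + 1) % 2 = parityClass X := by
  cases X <;> simp only [badPart, parityClass, Nat.even_iff, Nat.odd_iff] <;> omega

lemma mod_two_eq_zero_of_sumParity {n : ℕ} (hp : sumParity X n) (hX : parityClass X = 0) :
    n % 2 = 0 := by
  cases X with
  | C => exact Nat.even_iff.1 hp
  | B | D => exact absurd hX one_ne_zero

lemma InP.colSum_mod_two (h : InP X l) {j : ℕ} (hj : j % 2 = parityClass X) :
    colSum l j % 2 = l.sum % 2 := by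
  have hshift : ∀ i, colSum l j % 2 = colSum l (j + 2 * i) % 2 := by
    intro i
    induction i with
    | zero => rfl
    | succ i ih =>
      have hcount := colSum_add_colSum_add_count l (j + 2 * i)
      have heven := Nat.even_iff.1 (h.2 (j + 2 * i + 1) ((badPart_iff _).2 (by omega)))
      rw [ih, Nat.mul_succ, ← add_assoc]
      omega
  rw [hshift l.sum, colSum_eq_sum (by omega)]

lemma inP_of_colSum_mod_two (hl : IsPartition l)
    (h : ∀ j, j % 2 = parityClass X → colSum l j % 2 = l.sum % 2) : InP X l := by
  refine ⟨hl, fun a ha => Nat.even_iff.2 ?_⟩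
  rw [badPart_iff] at ha
  rcases a with _ | a
  · rw [Multiset.count_eq_zero_of_notMem fun hmem => lt_irrefl 0 (hl 0 hmem)]
  · have hcount := colSum_add_colSum_add_count l a
    have hleft := h a (by omega)
    have hright := h (a + 2) (by omega)
    omega

lemma exists_height_eq_of_psum_corner {k : ℕ}
    (hk : psum l k + psum l (k + 2) < 2 * psum l (k + 1)) : ∃ b, height l (b + 1) = k + 1 := by
  by_contra! hne
  refine hk.ne ?_
  simp only [psum_eq_sum_range l _ le_rfl]
  rw [← Finset.sum_add_distrib, Finset.mul_sum]
  refine Finset.sum_congr rfl fun b _ => ?_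
  have := hne b
  omega

-- At a corner the Legendre equality holds at two adjacent columns, one of them in the class of `X`.
lemma InP.psum_mod_two_of_corner (h : InP X l) {k : ℕ}
    (hk : psum l k + psum l (k + 2) < 2 * psum l (k + 1)) :
    psum l (k + 1) % 2 = (parityClass X * (k + 1)) % 2 := by
  obtain ⟨b, hb⟩ := exists_height_eq_of_psum_corner hk
  obtain ⟨c, hc, hbc, hcb⟩ : ∃ c, c % 2 = parityClass X ∧ b ≤ c ∧ c ≤ b + 1 := by
    by_cases hbX : b % 2 = parityClass X
    · exact ⟨b, hbX, le_rfl, b.le_succ⟩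
    · have hX := parityClass_lt_two X
      exact ⟨b + 1, by omega, b.le_succ, le_rfl⟩
  have hduality : psum l (k + 1) + colSum l c = l.sum + (k + 1) * c :=
    psum_add_colSum_eq (fun a ha => hb ▸ height_antitone l (by omega))
      (hb ▸ height_antitone l (by omega))
  have hcol := h.colSum_mod_two hc
  have hmul : (parityClass X * (k + 1)) % 2 = ((k + 1) * c) % 2 := by
    rw [← hc, Nat.mod_mul_mod, mul_comm]
  omega

lemma InP.dom_transpose (h : InP X l) {τ μ : Ptn} (hdom : Dom l (transpose τ))
    (hround : ∀ j v, v % 2 = (parityClass X * j) % 2 → v ≤ colSum τ j → v ≤ colSum μ j) :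
    Dom l (transpose μ) := by
  intro j
  rw [psum_transpose]
  refine (colSum_isConcaveSeq μ).le_of_le_at_corners (by simp only [psum_zero, zero_le])
    (psum_le_sum l) (fun k hk => hround _ _ (h.psum_mod_two_of_corner hk) ?_) j
  rw [← psum_transpose]
  exact hdom _

end Parity

/-! ### Column sums of the collapse -/

/-- The least integer `≥ a` that is congruent to `n` modulo 2. -/
def parityCeil (n a : ℕ) : ℕ := a + (a + n) % 2

lemma le_parityCeil (n a : ℕ) : a ≤ parityCeil n a := Nat.le_add_right _ _

lemma parityCeil_mod_two (n a : ℕ) : parityCeil n a % 2 = n % 2 := by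
  unfold parityCeil
  omega

lemma parityCeil_le {n a b : ℕ} (hab : a ≤ b) (hb : b % 2 = n % 2) : parityCeil n a ≤ b := by
  unfold parityCeil
  omega

/-- The column sums of the `X`-collapse of `l`. The columns in the class of `X` are rounded up to
the parity of `|l|`, the others are raised where concavity requires it; the division by 2 is
exact. -/
def collapseColSum (X : PType) (l : Ptn) : ℕ → ℕ
  | 0 => 0
  | j + 1 =>
    if (j + 1) % 2 = parityClass X then parityCeil l.sum (colSum l (j + 1))
    else max (colSum l (j + 1))
      ((parityCeil l.sum (colSum l j) + parityCeil l.sum (colSum l (j + 2))) / 2)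

section Collapse

variable {X : PType} {l m : Ptn}

lemma collapseColSum_of_mod_two_eq (hp : sumParity X l.sum) {j : ℕ}
    (hj : j % 2 = parityClass X) : collapseColSum X l j = parityCeil l.sum (colSum l j) := by
  rcases j with _ | j
  · have heven := mod_two_eq_zero_of_sumParity hp hj.symm
    rw [collapseColSum, parityCeil, colSum_zero_right, zero_add, zero_add, heven]
  · rw [collapseColSum, if_pos hj]

lemma collapseColSum_succ_of_mod_two_ne {j : ℕ} (hj : (j + 1) % 2 ≠ parityClass X) :
    collapseColSum X l (j + 1) = max (colSum l (j + 1))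
      ((parityCeil l.sum (colSum l j) + parityCeil l.sum (colSum l (j + 2))) / 2) := by
  rw [collapseColSum, if_neg hj]

lemma colSum_le_collapseColSum (j : ℕ) : colSum l j ≤ collapseColSum X l j := by
  rcases j with _ | j
  · rw [colSum_zero_right, collapseColSum]
  · rw [collapseColSum]
    split_ifs
    · exact le_parityCeil _ _
    · exact le_max_left _ _

lemma collapseColSum_le {g : ℕ → ℕ} (hg : IsConcaveSeq g) (hle : ∀ j, colSum l j ≤ g j)
    (hround : ∀ j, j % 2 = parityClass X → parityCeil l.sum (colSum l j) ≤ g j) (j : ℕ) :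
    collapseColSum X l j ≤ g j := by
  rcases j with _ | j
  · exact Nat.zero_le _
  · rw [collapseColSum]
    split_ifs with hj
    · exact hround _ hj
    · have hX := parityClass_lt_two X
      have hleft := hround j (by omega)
      have hright := hround (j + 2) (by omega)
      have hconcave := hg j
      exact max_le (hle _) (by omega)

lemma collapseColSum_of_sum_lt {j : ℕ} (hj : l.sum < j) : collapseColSum X l j = l.sum := by
  obtain ⟨j, rfl⟩ := Nat.exists_eq_add_of_lt hj
  simp only [collapseColSum, parityCeil, colSum_eq_sum (l := l) (show l.sum ≤ l.sum + j by omega),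
    colSum_eq_sum (l := l) (show l.sum ≤ l.sum + j + 1 by omega),
    colSum_eq_sum (l := l) (show l.sum ≤ l.sum + j + 2 by omega)]
  split_ifs <;> omega

lemma collapseColSum_isConcaveSeq (hp : sumParity X l.sum) : IsConcaveSeq (collapseColSum X l) := by
  intro j
  have hX := parityClass_lt_two X
  by_cases hj : (j + 1) % 2 = parityClass X
  · have hmid := collapseColSum_of_mod_two_eq hp hj
    have hright := collapseColSum_succ_of_mod_two_ne (X := X) (l := l) (j := j + 1) (by omega)
    have hconcave := colSum_isConcaveSeq l j
    have hconcave' := colSum_isConcaveSeq l (j + 1)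
    simp only [parityCeil] at hmid hright
    rcases j with _ | j
    · rw [collapseColSum]
      grind
    · have hleft := collapseColSum_succ_of_mod_two_ne (X := X) (l := l) (j := j) (by omega)
      have hconcave'' := colSum_isConcaveSeq l j
      simp only [parityCeil] at hleft
      grind
  · rw [collapseColSum_of_mod_two_eq hp (j := j) (by omega),
      collapseColSum_of_mod_two_eq hp (j := j + 2) (by omega), collapseColSum_succ_of_mod_two_ne hj]
    have hleft := parityCeil_mod_two l.sum (colSum l j)
    have hright := parityCeil_mod_two l.sum (colSum l (j + 2))
    omega

lemma isCollapse_of_colSum_eq (hp : sumParity X l.sum) (hm : IsPartition m)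
    (hcol : ∀ j, colSum m j = collapseColSum X l j) : IsCollapse X l m := by
  have hsum : m.sum = l.sum := by
    rw [← colSum_eq_sum (show m.sum ≤ m.sum + l.sum + 1 by omega), hcol,
      collapseColSum_of_sum_lt (by omega)]
  refine ⟨inP_of_colSum_mod_two hm fun j hj => ?_, hsum, (dom_iff_colSum_le hsum).2 fun j => ?_,
    fun κ hκ hκsum hκdom => ?_⟩
  · rw [hcol, collapseColSum_of_mod_two_eq hp hj, parityCeil_mod_two, hsum]
  · rw [hcol]
    exact colSum_le_collapseColSum j
  · rw [dom_iff_colSum_le (hκsum.trans hsum.symm)]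
    have hle := (dom_iff_colSum_le hκsum).1 hκdom
    intro j
    rw [hcol]
    exact collapseColSum_le (colSum_isConcaveSeq κ) hle
      (fun i hi => parityCeil_le (hle i) (by rw [hκ.colSum_mod_two hi, hκsum])) j

lemma exists_isCollapse (hp : sumParity X l.sum) :
    ∃ m, IsCollapse X l m ∧ ∀ j, colSum m j = collapseColSum X l j := by
  obtain ⟨m, hm, hcol⟩ := (collapseColSum_isConcaveSeq hp).exists_colSum_eq rfl
    (N := l.sum + 1) fun j hj => collapseColSum_of_sum_lt hj
  exact ⟨m, isCollapse_of_colSum_eq hp hm hcol, hcol⟩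

lemma isCollapse_collapse (hp : sumParity X l.sum) : IsCollapse X l (collapse X l) := by
  have hdef : CollapseDefined X l := (exists_isCollapse hp).imp fun _ hm => hm.1
  rw [collapse, dif_pos hdef]
  exact hdef.choose_spec

lemma sum_collapse (hp : sumParity X l.sum) : (collapse X l).sum = l.sum :=
  (isCollapse_collapse hp).2.1

lemma collapse_dom (hp : sumParity X l.sum) : Dom (collapse X l) l :=
  (isCollapse_collapse hp).2.2.1

lemma colSum_collapse (hp : sumParity X l.sum) (j : ℕ) :
    colSum (collapse X l) j = collapseColSum X l j := by
  obtain ⟨m, ⟨hmP, hmsum, hmdom, hmmax⟩, hcol⟩ := exists_isCollapse hp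
  obtain ⟨hP, hsum, hdom, hmax⟩ := isCollapse_collapse hp
  rw [← hcol]
  exact le_antisymm
    ((dom_iff_colSum_le (hmsum.trans hsum.symm)).1 (hmax m hmP hmsum hmdom) j)
    ((dom_iff_colSum_le (hsum.trans hmsum.symm)).1 (hmmax _ hP hsum hdom) j)

lemma collapse_dom_collapse (hp : sumParity X l.sum) (hsum : l.sum = m.sum)
    (hdom : Dom (collapse X l) m) : Dom (collapse X l) (collapse X m) :=
  (isCollapse_collapse (hsum ▸ hp)).2.2.2 _ (isCollapse_collapse hp).1
    ((sum_collapse hp).trans hsum) hdom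

lemma collapse_transpose_dom {τ μ : Ptn} (hp : sumParity X τ.sum) (hsum : τ.sum = μ.sum)
    (hround : ∀ j v, v % 2 = (parityClass X * j) % 2 → v ≤ colSum τ j → v ≤ colSum μ j) :
    Dom (collapse X (transpose τ)) (collapse X (transpose μ)) ∧
      Dom (collapse X (transpose τ)) (transpose μ) := by
  rw [← sum_transpose τ] at hp hsum
  have hdom : Dom (collapse X (transpose τ)) (transpose μ) :=
    (isCollapse_collapse hp).1.dom_transpose (collapse_dom hp) hround
  exact ⟨collapse_dom_collapse hp (hsum.trans (sum_transpose μ).symm) hdom, hdom⟩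

end Collapse

/-! ### The operations `λ⁻` and `λ⁺` -/

section DownUp

variable {l : Ptn}

lemma minPart_mem (hl : l ≠ 0) : minPart l ∈ l :=
  Nat.sInf_mem (s := {a | a ∈ l}) (Multiset.exists_mem_of_ne_zero hl)

lemma minPart_le {a : ℕ} (ha : a ∈ l) : minPart l ≤ a :=
  Nat.sInf_le (s := {a | a ∈ l}) ha

lemma colSum_down_add (hl : l ≠ 0) (hpos : IsPartition l) (j : ℕ) :
    colSum (down l) j + (if minPart l ≤ j then 1 else 0) = colSum l j := by
  have hmem := minPart_mem hl
  have hmin := hpos _ hmem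
  rw [← congrArg (colSum · j) (Multiset.cons_erase hmem), colSum_cons, down]
  split_ifs <;> try rw [colSum_cons]
  all_goals omega

lemma sum_down_add_one (hl : l ≠ 0) (hpos : IsPartition l) : (down l).sum + 1 = l.sum := by
  have hcol := colSum_down_add hl hpos (minPart l + (down l).sum + l.sum)
  rwa [if_pos (by omega), colSum_eq_sum (by omega), colSum_eq_sum (by omega)] at hcol

lemma maxPart_mem (hl : l ≠ 0) : maxPart l ∈ l := by
  obtain ⟨a, ha, hmax⟩ := Multiset.exists_max_image id hl
  rwa [maxPart, le_antisymm (Multiset.sup_le.2 hmax) (Multiset.le_sup ha)]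

-- For the empty partition `maxPart` is `0`, so that `up 0 = {1}`.
lemma colSum_up (l : Ptn) (j : ℕ) :
    colSum (up l) j = colSum l j + if maxPart l < j then 1 else 0 := by
  rcases eq_or_ne l 0 with rfl | hl
  · rw [up, colSum_cons]
    simp only [maxPart, Multiset.sup_zero, bot_eq_zero, Multiset.erase_zero]
    split_ifs <;> omega
  · rw [← congrArg (colSum · j) (Multiset.cons_erase (maxPart_mem hl)), up, colSum_cons]
    simp only [colSum_cons]
    split_ifs <;> omega

lemma sum_up (l : Ptn) : (up l).sum = l.sum + 1 := by
  have hcol := colSum_up l (maxPart l + 1 + (up l).sum + l.sum)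
  rwa [if_pos (by omega), colSum_eq_sum (by omega), colSum_eq_sum (by omega)] at hcol

lemma sumParity_C_sum_down (hl : l ≠ 0) (hpos : IsPartition l) (hodd : Odd l.sum) :
    sumParity PType.C (down l).sum := by
  rw [← sum_down_add_one hl hpos, Nat.odd_add_one, Nat.not_odd_iff_even] at hodd
  exact hodd

lemma sumParity_B_sum_up (heven : Even l.sum) : sumParity PType.B (up l).sum := by
  rw [sum_up]
  exact heven.add_one

lemma ne_zero_of_odd_sum (hodd : Odd l.sum) : l ≠ 0 := by
  rintro rfl
  exact Nat.not_odd_zero hodd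

lemma colSum_collapse_down_le (hpos : IsPartition l) (hodd : Odd l.sum) (j : ℕ) :
    colSum (collapse PType.C (down l)) j ≤ colSum l j := by
  have hl := ne_zero_of_odd_sum hodd
  have hdown := colSum_down_add hl hpos
  have hp := sumParity_C_sum_down hl hpos hodd
  rw [colSum_collapse hp]
  refine collapseColSum_le (colSum_isConcaveSeq l) (fun i => by rw [← hdown i]; omega)
    (fun i hi => ?_) j
  have hceil : (down l).sum % 2 = 0 := Nat.even_iff.1 hp
  by_cases hmin : minPart l ≤ i
  · rw [← hdown i, if_pos hmin, parityCeil]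
    omega
  · have hcol : colSum l i = Multiset.card l * i :=
      colSum_eq_card_mul_of_forall_ge fun p hpl => (not_le.1 hmin).le.trans (minPart_le hpl)
    have heven : colSum l i % 2 = 0 := by
      rw [hcol, Nat.mul_mod, hi, parityClass, mul_zero, Nat.zero_mod]
    exact parityCeil_le (by rw [← hdown i]; omega) (heven.trans hceil.symm)

lemma InP.le_colSum_collapse_down (h : InP PType.B l) (hodd : Odd l.sum) {j v : ℕ}
    (hv : v % 2 = 0) (hle : v ≤ colSum l j) : v ≤ colSum (collapse PType.C (down l)) j := by
  have hl := ne_zero_of_odd_sum hodd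
  have hdown := colSum_down_add hl h.1 j
  have hp := sumParity_C_sum_down hl h.1 hodd
  have hsum : (down l).sum % 2 = 0 := Nat.even_iff.1 hp
  rw [colSum_collapse hp]
  by_cases hj : j % 2 = 0
  · rw [collapseColSum_of_mod_two_eq hp hj, parityCeil]
    split_ifs at hdown <;> omega
  · have hcol := h.colSum_mod_two (j := j) (Nat.mod_two_ne_zero.1 hj)
    rw [Nat.odd_iff.1 hodd] at hcol
    refine le_trans ?_ (colSum_le_collapseColSum j)
    split_ifs at hdown <;> omega

lemma colSum_collapse_up_le (heven : Even l.sum) (j : ℕ) :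
    colSum (collapse PType.B (up l)) j ≤ colSum l j + 1 := by
  have hconcave : IsConcaveSeq fun i => colSum l i + 1 := fun i => by
    have hl := colSum_isConcaveSeq l i
    change colSum l i + 1 + (colSum l (i + 2) + 1) ≤ 2 * (colSum l (i + 1) + 1)
    omega
  rw [colSum_collapse (sumParity_B_sum_up heven)]
  refine collapseColSum_le hconcave (fun i => ?_) (fun i _ => ?_) j
  · rw [colSum_up]
    split_ifs <;> omega
  · by_cases hmax : maxPart l < i
    · have hcol : colSum l i = l.sum :=
        colSum_eq_sum_of_forall_le fun p hp => (Multiset.le_sup hp).trans hmax.le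
      rw [colSum_up, if_pos hmax, sum_up, hcol]
      exact parityCeil_le le_rfl rfl
    · rw [colSum_up, if_neg hmax, parityCeil]
      omega

lemma InP.le_colSum_collapse_up (h : InP PType.C l) (heven : Even l.sum) {j v : ℕ}
    (hv : v % 2 = j % 2) (hle : v ≤ colSum l j + 1) :
    v ≤ colSum (collapse PType.B (up l)) j := by
  have hp := sumParity_B_sum_up heven
  have hup : colSum l j ≤ colSum (up l) j := by
    rw [colSum_up]
    omega
  have hsum := Nat.even_iff.1 heven
  rw [colSum_collapse hp]
  by_cases hj : j % 2 = 1
  · rw [collapseColSum_of_mod_two_eq hp hj, parityCeil, sum_up]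
    omega
  · have hcol := h.colSum_mod_two (j := j) (Nat.mod_two_ne_one.1 hj)
    refine le_trans ?_ (colSum_le_collapseColSum j)
    omega

end DownUp

/-! ### Comparison of the duals -/

section Comparison

variable {nu eta : Ptn}

lemma dS_B_dom (h : InP PType.B (nu + eta)) (hodd : Odd (nu + eta).sum) (hnu : Even nu.sum) :
    Dom (dS PType.B nu eta) (dS PType.B 0 (nu + eta)) ∧
      Dom (dS PType.B nu eta) (transpose (collapse PType.C (down (nu + eta)))) := by
  have hpos : IsPartition eta := fun a ha => h.1 a (Multiset.mem_add.2 (Or.inr ha))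
  have hetaodd : Odd eta.sum := by
    rw [Multiset.sum_add] at hodd
    exact (Nat.odd_add'.1 hodd).2 hnu
  have heta := ne_zero_of_odd_sum hetaodd
  have hlam := ne_zero_of_odd_sum hodd
  have hpeta := sumParity_C_sum_down heta hpos hetaodd
  have hplam := sumParity_C_sum_down hlam h.1 hodd
  have hsum : (nu + collapse PType.C (down eta)).sum =
      (collapse PType.C (down (nu + eta))).sum := by
    have hdown_eta := sum_down_add_one heta hpos
    have hdown_lam := sum_down_add_one hlam h.1
    rw [Multiset.sum_add] at hdown_lam ⊢
    rw [sum_collapse hpeta, sum_collapse hplam]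
    omega
  simp only [dS, zero_add]
  refine collapse_transpose_dom ?_ hsum fun j v hv hle => ?_
  · rwa [hsum, sum_collapse hplam]
  · rw [parityClass, zero_mul] at hv
    refine h.le_colSum_collapse_down hodd hv (hle.trans ?_)
    rw [colSum_add, colSum_add]
    exact Nat.add_le_add_left (colSum_collapse_down_le hpos hetaodd j) _

lemma dS_C_dom (h : InP PType.C (nu + eta)) (heven : Even (nu + eta).sum) (hnu : Even nu.sum) :
    Dom (dS PType.C nu eta) (dS PType.C 0 (nu + eta)) ∧
      Dom (dS PType.C nu eta) (transpose (collapse PType.B (up (nu + eta)))) := by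
  have hetaeven : Even eta.sum := by
    rw [Multiset.sum_add] at heven
    exact (Nat.even_add.1 heven).1 hnu
  have hpeta := sumParity_B_sum_up hetaeven
  have hplam := sumParity_B_sum_up heven
  have hsum : (nu + collapse PType.B (up eta)).sum = (collapse PType.B (up (nu + eta))).sum := by
    rw [Multiset.sum_add, sum_collapse hpeta, sum_collapse hplam, sum_up, sum_up,
      Multiset.sum_add, add_assoc]
  simp only [dS, zero_add]
  refine collapse_transpose_dom ?_ hsum fun j v hv hle => ?_
  · rwa [hsum, sum_collapse hplam]
  · rw [parityClass, one_mul] at hv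
    refine h.le_colSum_collapse_up heven hv (hle.trans ?_)
    rw [colSum_add, colSum_add, add_assoc]
    exact Nat.add_le_add_left (colSum_collapse_up_le hetaeven j) _

lemma dS_D_dom (heven : Even (nu + eta).sum) (hnu : Even nu.sum) :
    Dom (dS PType.D nu eta) (dS PType.D 0 (nu + eta)) ∧
      Dom (dS PType.D nu eta) (collapse PType.D (transpose (nu + eta))) := by
  have hpeta : sumParity PType.D (transpose eta).sum := by
    rw [Multiset.sum_add] at heven
    rw [sum_transpose]
    exact (Nat.even_add.1 heven).1 hnu
  have hplam : sumParity PType.D (transpose (nu + eta)).sum := by rwa [sum_transpose]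
  have hsum : (transpose (nu + transpose (collapse PType.D (transpose eta)))).sum =
      (transpose (nu + eta)).sum := by
    simp only [sum_transpose, Multiset.sum_add, sum_collapse hpeta]
  have hp := hsum ▸ hplam
  simp only [dS, zero_add]
  have hdom : Dom (transpose (nu + transpose (collapse PType.D (transpose eta))))
      (transpose (nu + eta)) := fun j => by
    have hcollapse := collapse_dom hpeta j
    rw [psum_transpose] at hcollapse
    simpa only [psum_transpose, colSum_add, colSum_transpose, add_le_add_iff_left] using hcollapse
  have hmain := collapse_dom_collapse hp hsum fun j => (collapse_dom hp j).trans (hdom j)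
  refine ⟨collapse_dom_collapse hp ?_ fun j => ?_, hmain⟩
  · rw [hsum, sum_transpose (transpose _), sum_transpose (collapse _ _), sum_collapse hplam]
  · rw [psum_transpose, colSum_transpose]
    exact hmain j

end Comparison

lemma even_sum_iff_even_card {s : Multiset ℕ} (hs : ∀ a ∈ s, Odd a) :
    Even s.sum ↔ Even (Multiset.card s) := by
  induction s using Multiset.induction_on with
  | empty => simp
  | cons a s ih =>
    obtain ⟨ha, hs⟩ := Multiset.forall_mem_cons.1 hs
    rw [Multiset.sum_cons, Multiset.card_cons, Nat.even_add, Nat.even_add_one, ih hs]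
    simp only [Nat.not_even_iff_odd.2 ha, false_iff]

lemma IsMarked.even_sum {X : PType} {nu eta : Ptn} (h : IsMarked X nu eta) : Even nu.sum := by
  obtain ⟨-, -, hmark, hcard⟩ := h
  cases X with
  | B => exact (even_sum_iff_even_card fun a ha => (hmark a ha).2).2 (hcard (Or.inl rfl))
  | C =>
    rw [even_iff_two_dvd]
    exact Multiset.dvd_sum fun a ha => even_iff_two_dvd.1 (show Even a from (hmark a ha).2)
  | D => exact (even_sum_iff_even_card fun a ha => (hmark a ha).2).2 (hcard (Or.inr rfl))

theorem dS_le_dS_trivial_general (X : PType) (nu eta : Ptn) (h : InP X (nu + eta))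
    (hsum : sumParity X (nu + eta).sum) (hnu : Even nu.sum) :
    Dom (dS X nu eta) (dS X 0 (nu + eta)) ∧
    (X = PType.B → Dom (dS X nu eta) (transpose (collapse PType.C (down (nu + eta))))) ∧
    (X = PType.C → Dom (dS X nu eta) (transpose (collapse PType.B (up (nu + eta))))) ∧
    (X = PType.D → Dom (dS X nu eta) (collapse PType.D (transpose (nu + eta)))) := by
  cases X with
  | B => simpa using dS_B_dom h hsum hnu
  | C => simpa using dS_C_dom h hsum hnu
  | D => simpa using dS_D_dom hsum hnu

/-- Proposition 2.3 of the paper in the classical types: `d_S⟨λ,ν⟩ ≤ d_S⟨λ,∅⟩`, with the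
explicit formulas for `d_S⟨λ,∅⟩` in each type. -/
theorem dS_le_dS_trivial (X : PType) (nu eta : Ptn)
    (h : IsMarked X nu eta) (hC : X = PType.C → eta ≠ 0) :
    Dom (dS X nu eta) (dS X 0 (nu + eta)) ∧
    (X = PType.B → Dom (dS X nu eta) (transpose (collapse PType.C (down (nu + eta))))) ∧
    (X = PType.C → Dom (dS X nu eta) (transpose (collapse PType.B (up (nu + eta))))) ∧
    (X = PType.D → Dom (dS X nu eta) (collapse PType.D (transpose (nu + eta)))) := by
  exact dS_le_dS_trivial_general X nu eta h.1 h.2.1 h.even_sum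

end NilDual
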